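/- arXiv:2204.03543 — 2 statements merged into one kernel-verified Lean document; each statement's English description precedes it below -/
import Mathlib

section
/- Let λ ∈ (0, 1/2), f : 𝕋 → ℝ continuous, E ∈ ℝ, and suppose Λ : S → ℝP¹ is a map on the standard solenoid and C, c > 0 are constants such that for every ω̃ ∈ S and every unit vector v spanning Λ(ω̃), one has ‖A^n_{E−f̃}(ω̃) v‖ ≤ C e^{−cn} for all n ∈ ℕ. Then Λ depends only on the first coordinate: Λ(ω, x, y) = Λ(ω, x', y') whenever (ω, x, y), (ω, x', y') ∈ S. -/
open Filter Topology Real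

noncomputable section

/-- The circle `𝕋 = ℝ/ℤ`. -/
abbrev 𝕋 : Type := AddCircle (1 : ℝ)

/-- The doubling map `T : ω ↦ 2ω` on the circle. -/
def doubling : 𝕋 → 𝕋 := fun ω => (2 : ℤ) • ω

/-- `cos (2πω)` as a function on the circle. -/
def cos2pi : 𝕋 → ℝ :=
  Function.Periodic.lift (f := fun x : ℝ => Real.cos (2 * π * x)) (c := 1)
    (by intro x; simp [mul_add, Real.cos_add_two_pi])

/-- `sin (2πω)` as a function on the circle. -/
def sin2pi : 𝕋 → ℝ :=
  Function.Periodic.lift (f := fun x : ℝ => Real.sin (2 * π * x)) (c := 1)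
    (by intro x; simp [mul_add, Real.sin_add_two_pi])

/-- The solid torus `𝔗 = 𝕋 × D²`, realized as a subset of `𝕋 × ℝ × ℝ`. -/
def solidTorus : Set (𝕋 × ℝ × ℝ) := {p | p.2.1 ^ 2 + p.2.2 ^ 2 ≤ 1}

/-- The solenoid map `F(ω,x,y) = (2ω, λx + cos(2πω)/2, λy + sin(2πω)/2)`. -/
def solmap (lam : ℝ) : 𝕋 × ℝ × ℝ → 𝕋 × ℝ × ℝ :=
  fun p => (doubling p.1, lam * p.2.1 + cos2pi p.1 / 2, lam * p.2.2 + sin2pi p.1 / 2)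

/-- The standard solenoid `S = ⋂ₙ Fⁿ(𝔗)`. -/
def solenoid (lam : ℝ) : Set (𝕋 × ℝ × ℝ) := ⋂ n : ℕ, (solmap lam)^[n] '' solidTorus

/-- The one-step transfer matrix `A_{E-g}(ω) = [[E - g(ω), -1], [1, 0]]`. -/
def transfer {α : Type*} (g : α → ℝ) (E : ℝ) (ω : α) : Matrix (Fin 2) (Fin 2) ℝ :=
  !![E - g ω, -1; 1, 0]

/-- The `n`-step transfer matrix cocycle `Aⁿ_{E-g}(ω) = A(Tⁿ⁻¹ω) ⋯ A(Tω) A(ω)`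
over the base dynamics `T`. -/
def transferN {α : Type*} (T : α → α) (g : α → ℝ) (E : ℝ) : ℕ → α → Matrix (Fin 2) (Fin 2) ℝ
  | 0, _ => 1
  | n + 1, ω => transfer g E (T^[n] ω) * transferN T g E n ω


/-- The real projective line `ℝP¹`, as the quotient of `ℝ² \ {0}` by proportionality. -/
abbrev RP1 : Type :=
  Quot (fun v w : {v : Fin 2 → ℝ // v ≠ 0} => ∃ c : ℝ, c • (v : Fin 2 → ℝ) = (w : Fin 2 → ℝ))

theorem transferN_base_eq (lam : ℝ) (f : 𝕋 → ℝ) (E : ℝ) (p q : 𝕋 × ℝ × ℝ) (h : p.1 = q.1)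
    (n : ℕ) :
    transferN (solmap lam) (fun q : 𝕋 × ℝ × ℝ => f q.1) E n p =
      transferN (solmap lam) (fun q : 𝕋 × ℝ × ℝ => f q.1) E n q := by
  have key : ∀ n : ℕ, ((solmap lam)^[n] p).1 = ((solmap lam)^[n] q).1 := by
    intro n
    induction n with
    | zero => simpa using h
    | succ k ih =>
      rw [Function.iterate_succ_apply', Function.iterate_succ_apply']
      simp only [solmap] at ih ⊢
      rw [ih]
  induction n with
  | zero => rfl
  | succ k ih =>
    simp only [transferN, transfer]
    rw [ih, key k]

theorem transferN_det_one {α : Type*} (T : α → α) (g : α → ℝ) (E : ℝ) (n : ℕ) (ω : α) :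
    (transferN T g E n ω).det = 1 := by
  induction n with
  | zero => simp [transferN]
  | succ k ih =>
    rw [transferN, Matrix.det_mul, ih]
    simp [transfer, Matrix.det_fin_two]

theorem exists_unit_rep (L : RP1) : ∃ (v : Fin 2 → ℝ) (hv : v ≠ 0), ‖v‖ = 1 ∧
    L = Quot.mk _ (⟨v, hv⟩ : {u : Fin 2 → ℝ // u ≠ 0}) := by
  induction L using Quot.ind with
  | mk u =>
    obtain ⟨u, hu⟩ := u
    have hn : ‖u‖ ≠ 0 := norm_ne_zero_iff.mpr hu
    refine ⟨‖u‖⁻¹ • u, smul_ne_zero (inv_ne_zero hn) hu, ?_, Quot.sound ⟨‖u‖⁻¹, rfl⟩⟩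
    rw [norm_smul, norm_inv, norm_norm, inv_mul_cancel₀ hn]

theorem cross_mulVec (M : Matrix (Fin 2) (Fin 2) ℝ) (hM : M.det = 1) (v w : Fin 2 → ℝ) :
    v 0 * w 1 - v 1 * w 0 =
      M.mulVec v 0 * M.mulVec w 1 - M.mulVec v 1 * M.mulVec w 0 := by
  rw [Matrix.det_fin_two] at hM
  simp only [Matrix.mulVec, dotProduct, Fin.sum_univ_two]
  linear_combination (-(v 0 * w 1 - v 1 * w 0)) * hM

theorem cross_bound (a b : Fin 2 → ℝ) (e : ℝ) (ha : ‖a‖ ≤ e) (hb : ‖b‖ ≤ e) :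
    |a 0 * b 1 - a 1 * b 0| ≤ 2 * (e * e) := by
  have h (i j : Fin 2) : |a i * b j| ≤ e * e := by
    rw [abs_mul]
    exact mul_le_mul ((norm_le_pi_norm a i).trans ha) ((norm_le_pi_norm b j).trans hb)
      (abs_nonneg _) ((norm_nonneg _).trans ha)
  have := abs_sub (a 0 * b 1) (a 1 * b 0)
  linarith [h 0 1, h 1 0]

theorem proportional_of_cross (v w : Fin 2 → ℝ) (hv : v ≠ 0)
    (h : v 0 * w 1 - v 1 * w 0 = 0) : ∃ c : ℝ, c • v = w := by
  by_cases h0 : v 0 = 0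
  · have h1 : v 1 ≠ 0 := by
      intro h1
      apply hv
      ext i
      fin_cases i <;> simp [h0, h1]
    have hw : w 0 = 0 := by simpa [h0, h1] using h
    refine ⟨w 1 / v 1, ?_⟩
    ext i
    fin_cases i
    · simp [h0, hw]
    · simp [h1]
  · refine ⟨w 0 / v 0, ?_⟩
    ext i
    fin_cases i
    · simp [h0]
    · simp only [Fin.mk_one, Pi.smul_apply, smul_eq_mul]
      field_simp
      linarith

/-- If `Λ : S → ℝP¹` is a section on the standard solenoid such that unit
vectors `v` spanning `Λ(ω̃)` satisfy `‖Aⁿ_{E-f̃}(ω̃) v‖ ≤ C e^{-cn}` for all `n`, then `Λ`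
depends only on the first coordinate: `Λ(ω,x,y) = Λ(ω,x',y')` whenever both points lie
in `S`. -/
theorem stable_section_depends_only_on_base (lam : ℝ) (hlam : lam ∈ Set.Ioo (0 : ℝ) (1/2))
    (f : 𝕋 → ℝ) (hf : Continuous f) (E : ℝ) (Λ : (solenoid lam) → RP1)
    (C c : ℝ) (hC : 0 < C) (hc : 0 < c)
    (hdecay : ∀ (ω' : solenoid lam) (v : Fin 2 → ℝ) (hv : v ≠ 0), ‖v‖ = 1 →
      Λ ω' = Quot.mk _ (⟨v, hv⟩ : {u : Fin 2 → ℝ // u ≠ 0}) →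
      ∀ n : ℕ,
        ‖(transferN (solmap lam) (fun q : 𝕋 × ℝ × ℝ => f q.1) E n
            (ω' : 𝕋 × ℝ × ℝ)).mulVec v‖ ≤ C * Real.exp (-c * n)) :
    ∀ (ω : 𝕋) (x y x' y' : ℝ) (h1 : (ω, x, y) ∈ solenoid lam)
      (h2 : (ω, x', y') ∈ solenoid lam),
      Λ ⟨(ω, x, y), h1⟩ = Λ ⟨(ω, x', y'), h2⟩ := by
  intro ω x y x' y' h1 h2
  obtain ⟨v, hv, hv1, hLv⟩ := exists_unit_rep (Λ ⟨(ω, x, y), h1⟩)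
  obtain ⟨w, hw, hw1, hLw⟩ := exists_unit_rep (Λ ⟨(ω, x', y'), h2⟩)
  have dv := hdecay _ v hv hv1 hLv
  have dw := hdecay _ w hw hw1 hLw
  rw [hLv, hLw]
  apply Quot.sound
  apply proportional_of_cross v w hv
  have hb : ∀ n : ℕ, |v 0 * w 1 - v 1 * w 0| ≤
      2 * ((C * Real.exp (-c * n)) * (C * Real.exp (-c * n))) := by
    intro n
    have h2' := dw n
    dsimp only at h2'
    rw [transferN_base_eq lam f E (ω, x', y') (ω, x, y) rfl n] at h2'
    rw [cross_mulVec _ (transferN_det_one (solmap lam) (fun q : 𝕋 × ℝ × ℝ => f q.1) E n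
      (ω, x, y)) v w]
    exact cross_bound _ _ _ (dv n) h2'
  have ht : Tendsto (fun n : ℕ => C * Real.exp (-c * n)) atTop (𝓝 0) := by
    have h3 : Tendsto (fun n : ℕ => -c * (n : ℝ)) atTop atBot :=
      tendsto_natCast_atTop_atTop.const_mul_atTop_of_neg (by linarith)
    simpa using (Real.tendsto_exp_atBot.comp h3).const_mul C
  have ht2 := (ht.mul ht).const_mul 2
  simp only [mul_zero] at ht2
  have := ge_of_tendsto' ht2 hb
  exact abs_nonpos_iff.mp this
end
end

section
/- Let X be a compact metric space with a continuous flow τ, and let φ, ψ : X → 𝕋 be continuous maps that are homotopic. Fix x ∈ X and let Φ, Ψ : ℝ → ℝ be continuous lifts of t ↦ φ(τ^t x) and t ↦ ψ(τ^t x), respectively. If lim_{t→∞} Ψ(t)/t exists and equals r, then lim_{t→∞} Φ(t)/t exists and equals r. In other words, the rotation number along any fixed orbit is a homotopy invariant of circle-valued maps. -/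
open Filter Topology Real

noncomputable section

/-- The rotation number along any fixed orbit of a continuous flow on a
compact metric space is a homotopy invariant of circle-valued maps: if `φ` and `ψ` are
homotopic and continuous lifts `Φ, Ψ` of `t ↦ φ(τ^t x)`, `t ↦ ψ(τ^t x)` are given, and
`Ψ(t)/t → r`, then `Φ(t)/t → r`. -/
theorem rotation_number_homotopy_invariant {X : Type*} [MetricSpace X] [CompactSpace X]
    (τ : ℝ → X → X) (hτ : Continuous fun p : ℝ × X => τ p.1 p.2)
    (hτ0 : τ 0 = id) (hτadd : ∀ s t : ℝ, τ (s + t) = τ s ∘ τ t)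
    (φ ψ : C(X, 𝕋)) (h : φ.Homotopic ψ) (x : X)
    (Φ Ψ : ℝ → ℝ) (hΦ : Continuous Φ) (hΨ : Continuous Ψ)
    (hΦlift : ∀ t : ℝ, ((Φ t : ℝ) : 𝕋) = φ (τ t x))
    (hΨlift : ∀ t : ℝ, ((Ψ t : ℝ) : 𝕋) = ψ (τ t x))
    (r : ℝ) (hr : Tendsto (fun t => Ψ t / t) atTop (𝓝 r)) :
    Tendsto (fun t => Φ t / t) atTop (𝓝 r) := by
  obtain ⟨H⟩ := h
  have cov : IsCoveringMap ((↑) : ℝ → 𝕋) := AddCircle.isCoveringMap_coe (1 : ℝ)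
  let K : C(unitInterval × X, 𝕋) := ⟨fun p => H p - φ p.2, by fun_prop⟩
  let f : C(X, ℝ) := ContinuousMap.const X 0
  have K0 : ∀ a, K (0, a) = ((f a : ℝ) : 𝕋) := by
    intro a
    simp [K, f]
  let G := cov.liftHomotopy K f K0
  have hG : ∀ p, ((G p : ℝ) : 𝕋) = K p := fun p =>
    congrFun (cov.liftHomotopy_lifts K f K0) p
  let g : X → ℝ := fun y => G (1, y)
  have hg : Continuous g := by fun_prop
  have hgl : ∀ y, ((g y : ℝ) : 𝕋) = ψ y - φ y := by
    intro y
    simp [g, hG, K]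
  have hτx : Continuous fun t => τ t x :=
    hτ.comp (continuous_id.prodMk continuous_const)
  let D : ℝ → ℝ := fun t => Ψ t - Φ t - g (τ t x)
  have hD : Continuous D := (hΨ.sub hΦ).sub (hg.comp hτx)
  have hD0 : ∀ t, ((D t : ℝ) : 𝕋) = 0 := by
    intro t
    simp only [D, AddCircle.coe_sub, hΨlift, hΦlift, hgl, sub_self]
  have hconst : D = fun _ => D 0 := by
    refine cov.eq_of_comp_eq hD continuous_const ?_ 0 rfl
    funext t
    simp [hD0]
  obtain ⟨C, hC⟩ := isCompact_univ.exists_bound_of_continuousOn hg.continuousOn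
  have hb : Tendsto (fun t : ℝ => (D 0 + g (τ t x)) / t) atTop (𝓝 0) := by
    refine squeeze_zero_norm' (a := fun t : ℝ => (|D 0| + C) / t) ?_
      (tendsto_const_nhds.div_atTop tendsto_id)
    filter_upwards [eventually_gt_atTop 0] with t ht
    rw [norm_div, Real.norm_of_nonneg ht.le]
    gcongr
    refine (norm_add_le _ _).trans ?_
    rw [Real.norm_eq_abs (D 0)]
    gcongr
    exact hC _ (Set.mem_univ _)
  have := hr.sub hb
  rw [sub_zero] at this
  refine this.congr fun t => ?_
  have h1 : Ψ t - Φ t - g (τ t x) = D 0 := congrFun hconst t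
  rw [← h1]
  ring
end
end
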